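/- Suppose the nonuniform time mesh satisfies: for every k ≥ 2, if ρ* < ρ_k < η then ρ* < ρ_{k+1} ≤ ρ_k²(1+ρ_k)/(1 − 3ρ_k²(1+ρ_k)), and if ρ_k ≥ η then ρ_{k+1} > ρ*. Then for every n ≥ 1 and every vector x = (x_1, …, x_n) ∈ ℝⁿ, the quadratic form of the L2-1_σ matrix M satisfies xᵀ(M + Mᵀ)x ≥ (1−α)^{−1} Σ_{k=1}^n g_k(α) x_k² ≥ 0, where each g_k(α) > 0. Equivalently, the bilinear form 𝓑_n of the L2-1_σ operator is positive semidefinite, with 𝓑_n(u,u) ≥ Σ_{k=1}^n [g_k(α)/(2Γ(2−α))] ‖δ_k u‖²_{L²} ≥ 0. -/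

import Mathlib

open MeasureTheory Real Finset

noncomputable section

/-- Time step `τ_j = t_j - t_{j-1}`. -/
def tau (t : ℕ → ℝ) (j : ℕ) : ℝ := t j - t (j - 1)

/-- Step ratio `ρ_j = τ_j / τ_{j-1}`. -/
def rho (t : ℕ → ℝ) (j : ℕ) : ℝ := tau t j / tau t (j - 1)

/-- Offset node `t_k^* = t_{k-1} + σ τ_k` with `σ = 1 - α/2`. -/
def tstar (α : ℝ) (t : ℕ → ℝ) (k : ℕ) : ℝ := t (k - 1) + (1 - α / 2) * tau t k

/-- L2-1_σ coefficient `a_j^k`. -/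
def acoef (α : ℝ) (t : ℕ → ℝ) (j k : ℕ) : ℝ :=
  ∫ θ in (0:ℝ)..1,
    (-2 * tau t j * (1 - θ) - tau t (j + 1)) /
      ((tau t j + tau t (j + 1)) * (tstar α t k - (t (j - 1) + θ * tau t j)) ^ α)

/-- L2-1_σ coefficient `c_j^k`. -/
def ccoef (α : ℝ) (t : ℕ → ℝ) (j k : ℕ) : ℝ :=
  ∫ θ in (0:ℝ)..1,
    (tau t j ^ 2 * (2 * θ - 1)) /
      (tau t (j + 1) * (tau t j + tau t (j + 1)) *
        (tstar α t k - (t (j - 1) + θ * tau t j)) ^ α)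

/-- `d_j^k = c_{j-1}^k - a_j^k`. -/
def dcoef (α : ℝ) (t : ℕ → ℝ) (j k : ℕ) : ℝ := ccoef α t (j - 1) k - acoef α t j k

/-- The lower-triangular L2-1_σ matrix `M` (entries vanish above the diagonal and
for column index `0`). -/
def Mentry (α : ℝ) (t : ℕ → ℝ) (k j : ℕ) : ℝ :=
  if j = 0 ∨ k < j then 0
  else if j = k then ccoef α t (k - 1) k + (1 - α / 2) ^ (1 - α) / ((1 - α) * tau t k ^ α)
  else if j = 1 then -acoef α t 1 k
  else dcoef α t j k

end

noncomputable section

/-- The weights `g_k(α)` (for an `n`-step mesh): `g_1`, `g_n` (when `n ≠ 2`), and the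
generic formula for `2 ≤ k ≤ n-1` (also used for `k = n = 2`). -/
def gfun (α : ℝ) (t : ℕ → ℝ) (n k : ℕ) : ℝ :=
  if k = 1 then
    ((1 - α / 2) * tau t 1) ^ (-α) * (2 * (1 - α / 2) - (1 - α) / rho t 2 ^ α)
  else if k = n ∧ n ≠ 2 then
    (1 - α) * ccoef α t (n - 1) n + ((1 - α / 2) * tau t n) ^ (-α)
  else
    (1 - α) * ccoef α t (k - 1) k
      + ((1 - α / 2) * tau t k) ^ (-α) *
        (1 - α * (1 - α) / ((1 + rho t (k + 1)) * rho t (k + 1) ^ α) *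
          ∫ s in (0:ℝ)..1,
            s * (rho t (k + 1) + s) / ((1 - α / 2) * rho t (k + 1) + s))

end

noncomputable section


def Cf (h1 h2 A : ℝ) (ψ : ℝ → ℝ) : ℝ :=
  ∫ θ in (0:ℝ)..1, (h1 ^ 2 * (2 * θ - 1)) / (h2 * (h1 + h2)) * ψ (A + θ * h1)

def Af (h1 h2 A : ℝ) (ψ : ℝ → ℝ) : ℝ :=
  ∫ θ in (0:ℝ)..1, (2 * h1 * (1 - θ) + h2) / (h1 + h2) * ψ (A + θ * h1)

/-- `ψ` is increasing and convex with continuous derivative `φ` on `[a,b]`. -/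
def GoodOn (ψ φ : ℝ → ℝ) (a b : ℝ) : Prop :=
  (∀ s ∈ Set.Icc a b, HasDerivAt ψ (φ s) s) ∧ ContinuousOn φ (Set.Icc a b) ∧
    MonotoneOn φ (Set.Icc a b) ∧ ∀ s ∈ Set.Icc a b, 0 ≤ φ s

lemma GoodOn.mono {ψ φ : ℝ → ℝ} {a b c d : ℝ} (h : GoodOn ψ φ a b) (hc : a ≤ c) (hd : d ≤ b) :
    GoodOn ψ φ c d := by
  have hs : Set.Icc c d ⊆ Set.Icc a b := Set.Icc_subset_Icc hc hd
  exact ⟨fun s m => h.1 s (hs m), h.2.1.mono hs, h.2.2.1.mono hs, fun s m => h.2.2.2 s (hs m)⟩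

lemma mem_seg {A h θ : ℝ} (hh : 0 ≤ h) (hθ : θ ∈ Set.Icc (0:ℝ) 1) :
    A + θ * h ∈ Set.Icc A (A + h) := by
  have := mul_nonneg hθ.1 hh
  have := mul_le_mul_of_nonneg_right hθ.2 hh
  constructor <;> linarith

lemma cont_seg {φ : ℝ → ℝ} {A h : ℝ} (hh : 0 ≤ h) (hc : ContinuousOn φ (Set.Icc A (A + h))) :
    ContinuousOn (fun θ => φ (A + θ * h)) (Set.uIcc (0:ℝ) 1) := by
  rw [Set.uIcc_of_le zero_le_one]
  exact hc.comp (by fun_prop) (fun θ m => mem_seg hh m)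

lemma ibp {ψ φ W W' : ℝ → ℝ} {A h : ℝ} (hh : 0 ≤ h) (hg : GoodOn ψ φ A (A + h))
    (hW : ∀ θ, HasDerivAt W (W' θ) θ) (hW' : Continuous W') :
    ∫ θ in (0:ℝ)..1, W' θ * ψ (A + θ * h)
      = W 1 * ψ (A + h) - W 0 * ψ A - h * ∫ θ in (0:ℝ)..1, W θ * φ (A + θ * h) := by
  have hWc : Continuous W := continuous_iff_continuousAt.2 fun θ => (hW θ).continuousAt
  have key := intervalIntegral.integral_mul_deriv_eq_deriv_mul (a := (0:ℝ)) (b := 1)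
    (u := W) (u' := W') (v := fun θ => ψ (A + θ * h)) (v' := fun θ => φ (A + θ * h) * h)
    (fun θ _ => hW θ)
    (fun θ hθ => by
      rw [Set.uIcc_of_le zero_le_one] at hθ
      have h1 : HasDerivAt (fun θ : ℝ => A + θ * h) h θ := by
        simpa using ((hasDerivAt_id θ).mul_const h).const_add A
      exact (hg.1 _ (mem_seg hh hθ)).comp θ h1)
    (hW'.intervalIntegrable _ _)
    (((cont_seg hh hg.2.1).mul continuousOn_const).intervalIntegrable)
  have e : ∫ θ in (0:ℝ)..1, W θ * (φ (A + θ * h) * h)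
      = h * ∫ θ in (0:ℝ)..1, W θ * φ (A + θ * h) := by
    rw [← intervalIntegral.integral_const_mul]
    congr 1; ext θ; ring
  rw [e] at key
  simp only [one_mul, zero_mul, add_zero] at key
  linarith

lemma int_lower {φ W : ℝ → ℝ} {A h c : ℝ} (hh : 0 ≤ h)
    (hc : ContinuousOn φ (Set.Icc A (A + h))) (hW : Continuous W)
    (hW0 : ∀ θ ∈ Set.Icc (0:ℝ) 1, 0 ≤ W θ) (hle : ∀ s ∈ Set.Icc A (A + h), c ≤ φ s) :
    (∫ θ in (0:ℝ)..1, W θ) * c ≤ ∫ θ in (0:ℝ)..1, W θ * φ (A + θ * h) := by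
  rw [← intervalIntegral.integral_mul_const]
  apply intervalIntegral.integral_mono_on zero_le_one
  · exact (hW.mul continuous_const).intervalIntegrable _ _
  · exact (hW.continuousOn.mul (cont_seg hh hc)).intervalIntegrable
  · intro θ hθ
    exact mul_le_mul_of_nonneg_left (hle _ (mem_seg hh hθ)) (hW0 θ hθ)

lemma int_upper {φ W : ℝ → ℝ} {A h c : ℝ} (hh : 0 ≤ h)
    (hc : ContinuousOn φ (Set.Icc A (A + h))) (hW : Continuous W)
    (hW0 : ∀ θ ∈ Set.Icc (0:ℝ) 1, 0 ≤ W θ) (hle : ∀ s ∈ Set.Icc A (A + h), φ s ≤ c) :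
    ∫ θ in (0:ℝ)..1, W θ * φ (A + θ * h) ≤ (∫ θ in (0:ℝ)..1, W θ) * c := by
  rw [← intervalIntegral.integral_mul_const]
  apply intervalIntegral.integral_mono_on zero_le_one
  · exact (hW.continuousOn.mul (cont_seg hh hc)).intervalIntegrable
  · exact (hW.mul continuous_const).intervalIntegrable _ _
  · intro θ hθ
    exact mul_le_mul_of_nonneg_left (hle _ (mem_seg hh hθ)) (hW0 θ hθ)

lemma Cf_eq {ψ φ : ℝ → ℝ} {A h1 h2 : ℝ} (hh : 0 ≤ h1) (hg : GoodOn ψ φ A (A + h1)) :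
    Cf h1 h2 A ψ = h1 * ∫ θ in (0:ℝ)..1, (h1 ^ 2 * (θ - θ ^ 2) / (h2 * (h1 + h2))) * φ (A + θ * h1) := by
  have := ibp (W := fun θ => h1 ^ 2 * (θ ^ 2 - θ) / (h2 * (h1 + h2)))
    (W' := fun θ => (h1 ^ 2 * (2 * θ - 1)) / (h2 * (h1 + h2))) hh hg
    (fun θ => by
      have := ((((hasDerivAt_id θ).pow 2).sub (hasDerivAt_id θ)).const_mul (h1 ^ 2)).div_const (h2 * (h1 + h2))
      simpa using this) (by fun_prop)
  rw [Cf, this]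
  have e : ∀ θ : ℝ, h1 ^ 2 * (θ ^ 2 - θ) / (h2 * (h1 + h2)) * φ (A + θ * h1)
     = - (h1 ^ 2 * (θ - θ ^ 2) / (h2 * (h1 + h2)) * φ (A + θ * h1)) := fun θ => by ring
  simp only [e, intervalIntegral.integral_neg]
  ring

lemma Af_eq1 {ψ φ : ℝ → ℝ} {A h1 h2 : ℝ} (hh : 0 ≤ h1) (hp : 0 < h1 + h2) (hg : GoodOn ψ φ A (A + h1)) :
    Af h1 h2 A ψ = ψ A + h1 * ∫ θ in (0:ℝ)..1,
      ((1 - θ) * (h1 * (1 - θ) + h2) / (h1 + h2)) * φ (A + θ * h1) := by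
  have := ibp (W := fun θ => - ((1 - θ) * (h1 * (1 - θ) + h2) / (h1 + h2)))
    (W' := fun θ => (2 * h1 * (1 - θ) + h2) / (h1 + h2)) hh hg
    (fun θ => by
      have a := (hasDerivAt_id θ).const_sub 1
      have := ((a.mul ((a.const_mul h1).add_const h2)).div_const (h1 + h2)).neg
      exact this.congr_deriv (by simp; ring)) (by fun_prop)
  rw [Af, this]
  simp only [neg_mul, intervalIntegral.integral_neg]
  field_simp
  ring

lemma Af_eq2 {ψ φ : ℝ → ℝ} {A h1 h2 : ℝ} (hh : 0 ≤ h1) (hp : 0 < h1 + h2) (hg : GoodOn ψ φ A (A + h1)) :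
    Af h1 h2 A ψ = ψ (A + h1) - h1 * ∫ θ in (0:ℝ)..1,
      (θ * (h1 * (2 - θ) + h2) / (h1 + h2)) * φ (A + θ * h1) := by
  have := ibp (W := fun θ => (θ * (h1 * (2 - θ) + h2) / (h1 + h2)))
    (W' := fun θ => (2 * h1 * (1 - θ) + h2) / (h1 + h2)) hh hg
    (fun θ => by
      have a := (hasDerivAt_id θ).const_sub 2
      have := (((hasDerivAt_id θ).mul ((a.const_mul h1).add_const h2)).div_const (h1 + h2))
      exact this.congr_deriv (by simp; ring)) (by fun_prop)
  rw [Af, this]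
  field_simp
  ring

lemma Cf_nonneg {ψ φ : ℝ → ℝ} {A h1 h2 : ℝ} (hh : 0 ≤ h1) (h2p : 0 < h2)
    (hg : GoodOn ψ φ A (A + h1)) : 0 ≤ Cf h1 h2 A ψ := by
  rw [Cf_eq hh hg]
  apply mul_nonneg hh
  apply intervalIntegral.integral_nonneg zero_le_one
  intro θ hθ
  have := hg.2.2.2 _ (mem_seg hh hθ)
  have h3 : 0 ≤ θ - θ ^ 2 := by nlinarith [hθ.1, hθ.2]
  positivity

lemma Af_ge {ψ φ : ℝ → ℝ} {A h1 h2 : ℝ} (hh : 0 ≤ h1) (h2p : 0 < h2)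
    (hg : GoodOn ψ φ A (A + h1)) : ψ A ≤ Af h1 h2 A ψ := by
  rw [Af_eq1 hh (by linarith) hg]
  have : 0 ≤ h1 * ∫ θ in (0:ℝ)..1,
      ((1 - θ) * (h1 * (1 - θ) + h2) / (h1 + h2)) * φ (A + θ * h1) := by
    apply mul_nonneg hh
    apply intervalIntegral.integral_nonneg zero_le_one
    intro θ hθ
    have := hg.2.2.2 _ (mem_seg hh hθ)
    have h3 : 0 ≤ 1 - θ := by linarith [hθ.2]
    positivity
  linarith

lemma Af_le {ψ φ : ℝ → ℝ} {A h1 h2 : ℝ} (hh : 0 ≤ h1) (h2p : 0 < h2)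
    (hg : GoodOn ψ φ A (A + h1)) : Af h1 h2 A ψ ≤ ψ (A + h1) := by
  rw [Af_eq2 hh (by linarith) hg]
  have : 0 ≤ h1 * ∫ θ in (0:ℝ)..1,
      (θ * (h1 * (2 - θ) + h2) / (h1 + h2)) * φ (A + θ * h1) := by
    apply mul_nonneg hh
    apply intervalIntegral.integral_nonneg zero_le_one
    intro θ hθ
    have := hg.2.2.2 _ (mem_seg hh hθ)
    have h3 : 0 ≤ 2 - θ := by linarith [hθ.2]
    have := hθ.1
    positivity
  linarith

lemma key_nonneg {ψ φ : ℝ → ℝ} {A h0 h1 h2 : ℝ} (h0p : 0 ≤ h0) (h1p : 0 < h1) (h2p : 0 < h2)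
    (hcond : h2 * h0 ^ 3 ≤ h1 ^ 2 * (h0 + h1) * (h1 + 3 * h2))
    (hg : GoodOn ψ φ A (A + h0 + h1)) :
    0 ≤ Cf h1 h2 (A + h0) ψ - Cf h0 h1 A ψ + ψ (A + h0 + h1) - Af h1 h2 (A + h0) ψ := by
  have g0 : GoodOn ψ φ A (A + h0) := hg.mono le_rfl (by linarith)
  have g1 : GoodOn ψ φ (A + h0) (A + h0 + h1) := hg.mono (by linarith) le_rfl
  rw [Cf_eq h0p g0, Cf_eq h1p.le g1, Af_eq2 h1p.le (by linarith) g1]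
  set c := φ (A + h0) with hc
  have c0 : 0 ≤ c := hg.2.2.2 _ ⟨by linarith, by linarith⟩
  have b1 := int_lower (W := fun θ => h1 ^ 2 * (θ - θ ^ 2) / (h2 * (h1 + h2))) (c := c) h1p.le g1.2.1
    (by fun_prop) (fun θ hθ => by
      have h3 : 0 ≤ θ - θ ^ 2 := by nlinarith [hθ.1, hθ.2]
      positivity)
    (fun s hs => hg.2.2.1 ⟨by linarith, by linarith⟩ ⟨by linarith [hs.1], hs.2⟩ hs.1)
  have b2 := int_lower (W := fun θ => (θ * (h1 * (2 - θ) + h2) / (h1 + h2))) (c := c) h1p.le g1.2.1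
    (by fun_prop) (fun θ hθ => by
      have h3 : 0 ≤ 2 - θ := by linarith [hθ.2]
      have := hθ.1
      positivity)
    (fun s hs => hg.2.2.1 ⟨by linarith, by linarith⟩ ⟨by linarith [hs.1], hs.2⟩ hs.1)
  have b3 := int_upper (W := fun θ => h0 ^ 2 * (θ - θ ^ 2) / (h1 * (h0 + h1))) (c := c) h0p g0.2.1
    (by fun_prop) (fun θ hθ => by
      have h3 : 0 ≤ θ - θ ^ 2 := by nlinarith [hθ.1, hθ.2]
      positivity)
    (fun s hs => hg.2.2.1 ⟨hs.1, by linarith [hs.2]⟩ ⟨by linarith, by linarith⟩ hs.2)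
  have i0 : ∫ θ in (0:ℝ)..1, (θ - θ ^ 2) = 1 / 6 := by
    rw [intervalIntegral.integral_sub (by simp) (by simp)]
    simp; norm_num
  have i1 : ∀ a b : ℝ, ∫ θ in (0:ℝ)..1, a ^ 2 * (θ - θ ^ 2) / b = a ^ 2 / b / 6 := by
    intro a b
    have : ∀ θ : ℝ, a ^ 2 * (θ - θ ^ 2) / b = a ^ 2 / b * (θ - θ ^ 2) := fun θ => by ring
    simp only [this, intervalIntegral.integral_const_mul, i0]
    ring
  have i2 : ∫ θ in (0:ℝ)..1, (θ * (h1 * (2 - θ) + h2) / (h1 + h2))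
      = (2 * h1 / 3 + h2 / 2) / (h1 + h2) := by
    have : ∀ θ : ℝ, θ * (h1 * (2 - θ) + h2) / (h1 + h2)
      = (h1 / (h1 + h2)) * (θ - θ ^ 2) + θ * 1 := fun θ => by field_simp; ring
    simp only [this]
    rw [intervalIntegral.integral_add, intervalIntegral.integral_const_mul, i0]
    · simp; field_simp; ring
    · apply Continuous.intervalIntegrable; fun_prop
    · apply Continuous.intervalIntegrable; fun_prop
  rw [i1] at b1 b3
  rw [i2] at b2
  have m : h0 * (h0 ^ 2 / (h1 * (h0 + h1)) / 6)
      ≤ h1 * (h1 ^ 2 / (h2 * (h1 + h2)) / 6 + (2 * h1 / 3 + h2 / 2) / (h1 + h2)) := by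
    have e : h1 * (h1 ^ 2 / (h2 * (h1 + h2)) / 6 + (2 * h1 / 3 + h2 / 2) / (h1 + h2))
      = h1 * (h1 + 3 * h2) / h2 / 6 := by field_simp; ring
    have e2 : h0 * (h0 ^ 2 / (h1 * (h0 + h1)) / 6) = h0 ^ 3 / (h1 * (h0 + h1)) / 6 := by
      field_simp
    rw [e, e2]
    have : h0 ^ 3 / (h1 * (h0 + h1)) ≤ h1 * (h1 + 3 * h2) / h2 := by
      rw [div_le_div_iff₀ (by positivity) h2p]
      nlinarith
    linarith
  have m' := mul_le_mul_of_nonneg_right m c0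
  have b1' := mul_le_mul_of_nonneg_left b1 h1p.le
  have b2' := mul_le_mul_of_nonneg_left b2 h1p.le
  have b3' := mul_le_mul_of_nonneg_left b3 h0p
  nlinarith

lemma GoodOn.cont {ψ φ : ℝ → ℝ} {a b : ℝ} (h : GoodOn ψ φ a b) : ContinuousOn ψ (Set.Icc a b) :=
  fun s m => (h.1 s m).continuousAt.continuousWithinAt

lemma Cf_sub {ψ₁ ψ₂ : ℝ → ℝ} {A h1 h2 : ℝ} (hh : 0 ≤ h1)
    (c1 : ContinuousOn ψ₁ (Set.Icc A (A + h1))) (c2 : ContinuousOn ψ₂ (Set.Icc A (A + h1))) :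
    Cf h1 h2 A (fun s => ψ₁ s - ψ₂ s) = Cf h1 h2 A ψ₁ - Cf h1 h2 A ψ₂ := by
  have w : Continuous (fun θ : ℝ => (h1 ^ 2 * (2 * θ - 1)) / (h2 * (h1 + h2))) := by fun_prop
  have j1 : IntervalIntegrable (fun θ : ℝ => (h1 ^ 2 * (2 * θ - 1)) / (h2 * (h1 + h2)) * ψ₁ (A + θ * h1)) volume 0 1 :=
    (w.continuousOn.mul (cont_seg hh c1)).intervalIntegrable
  have j2 : IntervalIntegrable (fun θ : ℝ => (h1 ^ 2 * (2 * θ - 1)) / (h2 * (h1 + h2)) * ψ₂ (A + θ * h1)) volume 0 1 :=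
    (w.continuousOn.mul (cont_seg hh c2)).intervalIntegrable
  unfold Cf
  rw [← intervalIntegral.integral_sub j1 j2]
  congr 1; ext θ; ring

lemma Af_sub {ψ₁ ψ₂ : ℝ → ℝ} {A h1 h2 : ℝ} (hh : 0 ≤ h1)
    (c1 : ContinuousOn ψ₁ (Set.Icc A (A + h1))) (c2 : ContinuousOn ψ₂ (Set.Icc A (A + h1))) :
    Af h1 h2 A (fun s => ψ₁ s - ψ₂ s) = Af h1 h2 A ψ₁ - Af h1 h2 A ψ₂ := by
  have w : Continuous (fun θ : ℝ => (2 * h1 * (1 - θ) + h2) / (h1 + h2)) := by fun_prop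
  have j1 : IntervalIntegrable (fun θ : ℝ => (2 * h1 * (1 - θ) + h2) / (h1 + h2) * ψ₁ (A + θ * h1)) volume 0 1 :=
    (w.continuousOn.mul (cont_seg hh c1)).intervalIntegrable
  have j2 : IntervalIntegrable (fun θ : ℝ => (2 * h1 * (1 - θ) + h2) / (h1 + h2) * ψ₂ (A + θ * h1)) volume 0 1 :=
    (w.continuousOn.mul (cont_seg hh c2)).intervalIntegrable
  unfold Af
  rw [← intervalIntegral.integral_sub j1 j2]
  congr 1; ext θ; ring

/-- The kernel `(T - s)^(-α)`. -/
def ker (α T : ℝ) (s : ℝ) : ℝ := (T - s) ^ (-α)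

def dker (α T : ℝ) (s : ℝ) : ℝ := α * (T - s) ^ (-α - 1)

lemma hasDerivAt_rk {p T s : ℝ} (h : s < T) :
    HasDerivAt (fun s => (T - s) ^ (-p)) (p * (T - s) ^ (-p - 1)) s := by
  have h1 : HasDerivAt (fun s : ℝ => T - s) (-1) s := by
    simpa using (hasDerivAt_id s).const_sub T
  have := h1.rpow_const (p := -p) (Or.inl (by linarith : T - s ≠ 0) )
  convert this using 1
  ring

lemma good_ker {α T a b : ℝ} (hα : 0 < α) (hb : b < T) : GoodOn (ker α T) (dker α T) a b := by
  refine ⟨fun s hs => hasDerivAt_rk (lt_of_le_of_lt hs.2 hb), ?_, ?_, ?_⟩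
  · apply ContinuousOn.mul continuousOn_const
    apply ContinuousOn.rpow_const (by fun_prop)
    intro s hs
    left; linarith [hs.2]
  · intro s hs r hr hsr
    apply mul_le_mul_of_nonneg_left _ hα.le
    exact Real.rpow_le_rpow_of_nonpos (by linarith [hr.2]) (by linarith) (by linarith)
  · intro s hs
    have : 0 < T - s := by linarith [hs.2]
    unfold dker; positivity

lemma good_ker_sub {α T T' a b : ℝ} (hα : 0 < α) (hb : b < T) (hT : T ≤ T') :
    GoodOn (fun s => ker α T s - ker α T' s) (fun s => dker α T s - dker α T' s) a b := by
  have g := good_ker (a := a) hα hb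
  have g' := good_ker (a := a) hα (hb.trans_le hT)
  refine ⟨fun s hs => (g.1 s hs).sub (g'.1 s hs), g.2.1.sub g'.2.1, ?_, ?_⟩
  · have hd : ∀ {T : ℝ} (s : ℝ), s < T → HasDerivAt (dker α T)
        (α * ((α + 1) * (T - s) ^ (-(α + 1) - 1))) s := by
      intro T s hs
      have := (hasDerivAt_rk (p := α + 1) hs).const_mul α
      have e : -(α + 1) = -α - 1 := by ring
      rw [e] at this ⊢
      exact this
    apply monotoneOn_of_deriv_nonneg (convex_Icc a b) (g.2.1.sub g'.2.1)
    · intro s hs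
      rw [interior_Icc] at hs
      exact ((hd s (hs.2.trans hb)).sub (hd s (hs.2.trans (hb.trans_le hT)))).differentiableAt.differentiableWithinAt
    · intro s hs
      rw [interior_Icc] at hs
      have h1 : s < T := hs.2.trans hb
      have h2 : s < T' := h1.trans_le hT
      have := ((hd s h1).sub (hd s h2)).deriv
      rw [this, sub_nonneg]
      have : (T' - s) ^ (-(α + 1) - 1) ≤ (T - s) ^ (-(α + 1) - 1) :=
        Real.rpow_le_rpow_of_nonpos (by linarith) (by linarith) (by linarith)
      gcongr
  · intro s hs
    have h1 : s < T := hs.2.trans_lt hb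
    rw [sub_nonneg]
    apply mul_le_mul_of_nonneg_left _ hα.le
    exact Real.rpow_le_rpow_of_nonpos (by linarith) (by linarith) (by linarith)

/-- Abstract quadratic form lemma. -/
lemma row_abel (N : ℕ → ℝ) (h0 : N 0 = 0) (x : ℕ → ℝ) (k m : ℕ) (hm : m ≤ k) :
    ∑ i ∈ range m, (N (i + 1) - N i) * ((∑ j ∈ Ico (i + 1) (k + 1), x j) ^ 2 - (∑ j ∈ Ico (i + 1) k, x j) ^ 2)
    = N m * (x k ^ 2 + 2 * x k * ∑ j ∈ Ico m k, x j) + 2 * ∑ i ∈ range m, N i * x k * x i := by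
  induction m with
  | zero => simp [h0]
  | succ m ih =>
    rw [sum_range_succ, ih (by omega), sum_range_succ, Finset.sum_Ico_succ_top (by omega : m + 1 ≤ k),
      Finset.sum_eq_sum_Ico_succ_bot (by omega : m < k)]
    ring

lemma quad_lower (N : ℕ → ℕ → ℝ) (h0 : ∀ k, N k 0 = 0) (x : ℕ → ℝ) (n : ℕ)
    (hA : ∀ k i, k < n → i < k → N (k + 1) (i + 1) - N (k + 1) i ≤ N k (i + 1) - N k i)
    (m : ℕ) (hm : m ≤ n) :
    ∑ i ∈ range m, (N m (i + 1) - N m i) * (∑ j ∈ Ico (i + 1) (m + 1), x j) ^ 2 ≤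
    ∑ k ∈ range (m + 1), (N k k * x k ^ 2 + 2 * ∑ j ∈ range k, N k j * x k * x j) := by
  induction m with
  | zero => simp [h0]
  | succ m ih =>
    rw [sum_range_succ _ (m + 1)]
    have r := row_abel (N (m + 1)) (h0 _) x (m + 1) (m + 1) le_rfl
    simp only [Ico_self, sum_empty, mul_zero, add_zero] at r
    rw [← r]
    have ih' := ih (by omega)
    have : ∑ i ∈ range (m + 1), (N (m + 1) (i + 1) - N (m + 1) i) * (∑ j ∈ Ico (i + 1) (m + 1), x j) ^ 2
       ≤ ∑ i ∈ range m, (N m (i + 1) - N m i) * (∑ j ∈ Ico (i + 1) (m + 1), x j) ^ 2 := by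
      rw [sum_range_succ]
      simp only [Ico_self, sum_empty, ne_eq, OfNat.ofNat_ne_zero, not_false_eq_true, zero_pow, mul_zero, add_zero]
      apply sum_le_sum
      intro i hi
      exact mul_le_mul_of_nonneg_right (hA m i (by omega) (mem_range.1 hi)) (sq_nonneg _)
    simp only [mul_sub, sum_sub_distrib] at this ⊢
    linarith

lemma quad_nonneg (N : ℕ → ℕ → ℝ) (h0 : ∀ k, N k 0 = 0) (x : ℕ → ℝ) (n : ℕ)
    (hA : ∀ k i, k < n → i < k → N (k + 1) (i + 1) - N (k + 1) i ≤ N k (i + 1) - N k i)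
    (hB : ∀ i, i < n → 0 ≤ N n (i + 1) - N n i) :
    0 ≤ ∑ k ∈ range (n + 1), (N k k * x k ^ 2 + 2 * ∑ j ∈ range k, N k j * x k * x j) := by
  refine le_trans ?_ (quad_lower N h0 x n hA n le_rfl)
  exact sum_nonneg fun i hi => mul_nonneg (hB i (mem_range.1 hi)) (sq_nonneg _)

lemma quad_form_eq (M : ℕ → ℕ → ℝ) (hM0 : ∀ k, M k 0 = 0) (hM : ∀ k j, k < j → M k j = 0)
    (x : ℕ → ℝ) (n : ℕ) :
    ∑ k ∈ Icc 1 n, ∑ j ∈ Icc 1 n, x k * (M k j + M j k) * x j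
     = ∑ k ∈ range (n + 1), (2 * M k k * x k ^ 2 + 2 * ∑ j ∈ range k, M k j * x k * x j) := by
  induction n with
  | zero => simp [hM0]
  | succ n ih =>
    rw [sum_range_succ, ← ih]
    simp only [Finset.sum_Icc_succ_top (by omega : 1 ≤ n + 1), sum_add_distrib]
    have e1 : ∑ k ∈ Icc 1 n, x k * (M k (n + 1) + M (n + 1) k) * x (n + 1)
        = ∑ j ∈ range (n + 1), M (n + 1) j * x (n + 1) * x j := by
      rw [Finset.range_eq_Ico, Finset.sum_eq_sum_Ico_succ_bot (by omega)]
      simp only [hM0, zero_mul, zero_add]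
      apply sum_congr rfl
      intro k hk
      rw [hM k (n + 1) (by have := (mem_Icc.1 hk).2; omega)]
      ring
    have e2 : ∑ k ∈ Icc 1 n, x (n + 1) * (M (n + 1) k + M k (n + 1)) * x k
        = ∑ j ∈ range (n + 1), M (n + 1) j * x (n + 1) * x j := by
      rw [← e1]
      apply sum_congr rfl
      intro k hk
      ring
    rw [e1, e2]
    ring

lemma Af_bound {α σ A h1 h2 T : ℝ} (hα : 0 < α) (hσ : 0 < σ) (h1p : 0 < h1) (h2p : 0 < h2)
    (hT : T = A + h1 + σ * h2) :
    Af h1 h2 A (ker α T) ≤ ker α T A + (σ * h1) ^ (-α) *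
      (α / ((1 + h2 / h1) * (h2 / h1) ^ α) *
        ∫ s in (0:ℝ)..1, s * (h2 / h1 + s) / (σ * (h2 / h1) + s)) := by
  have hσ2 : 0 < σ * h2 := by positivity
  have g : GoodOn (ker α T) (dker α T) A (A + h1) := good_ker hα (by linarith)
  rw [Af_eq1 h1p.le (by linarith) g]
  have hsub := intervalIntegral.integral_comp_sub_left (a := 0) (b := 1)
    (fun s : ℝ => s * (h2 / h1 + s) / (σ * (h2 / h1) + s)) 1
  simp only [sub_self, sub_zero] at hsub
  rw [← hsub, ← mul_assoc, ← intervalIntegral.integral_const_mul, ← intervalIntegral.integral_const_mul]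
  have hle : ∫ θ in (0:ℝ)..1, h1 * ((1 - θ) * (h1 * (1 - θ) + h2) / (h1 + h2) * dker α T (A + θ * h1))
      ≤ ∫ θ in (0:ℝ)..1, (σ * h1) ^ (-α) * (α / ((1 + h2 / h1) * (h2 / h1) ^ α)) *
        ((1 - θ) * (h2 / h1 + (1 - θ)) / (σ * (h2 / h1) + (1 - θ))) := by
    apply intervalIntegral.integral_mono_on zero_le_one
    · apply ContinuousOn.intervalIntegrable
      have w : Continuous (fun θ : ℝ => (1 - θ) * (h1 * (1 - θ) + h2) / (h1 + h2)) := by fun_prop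
      exact continuousOn_const.mul (w.continuousOn.mul (cont_seg h1p.le g.2.1))
    · apply ContinuousOn.intervalIntegrable
      rw [Set.uIcc_of_le zero_le_one]
      apply ContinuousOn.mul continuousOn_const
      apply ContinuousOn.div (by fun_prop) (by fun_prop)
      intro θ hθ
      have : 0 < σ * (h2 / h1) := by positivity
      have := hθ.2
      linarith
    · intro θ hθ
      obtain ⟨s, hs⟩ : ∃ s, s = 1 - θ := ⟨_, rfl⟩
      have hs0 : 0 ≤ s := by linarith [hθ.2]
      rw [← hs]
      have hy : T - (A + θ * h1) = h1 * s + σ * h2 := by rw [hT, hs]; ring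
      have hyp : 0 < h1 * s + σ * h2 := by positivity
      unfold dker
      rw [hy, Real.rpow_sub_one hyp.ne']
      have k1 : (h1 * s + σ * h2) ^ (-α) ≤ (σ * h2) ^ (-α) :=
        Real.rpow_le_rpow_of_nonpos hσ2 (by nlinarith) (by linarith)
      have k2 : (σ * h2) ^ (-α) = (σ * h1) ^ (-α) / (h2 / h1) ^ α := by
        rw [Real.rpow_neg hσ2.le, Real.rpow_neg (by positivity), Real.div_rpow h2p.le h1p.le,
          Real.mul_rpow hσ.le h2p.le, Real.mul_rpow hσ.le h1p.le]
        have := Real.rpow_pos_of_pos hσ α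
        have := Real.rpow_pos_of_pos h1p α
        have := Real.rpow_pos_of_pos h2p α
        field_simp
      rw [k2] at k1
      have hρ : 0 < (h2 / h1) ^ α := Real.rpow_pos_of_pos (by positivity) _
      have hκ : 0 < (σ * h1) ^ (-α) := Real.rpow_pos_of_pos (by positivity) _
      generalize (σ * h1) ^ (-α) = κ at *
      generalize (h2 / h1) ^ α = R at *
      generalize (h1 * s + σ * h2) ^ (-α) = Y at *
      have e1 : h1 * (s * (h1 * s + h2) / (h1 + h2) * (α * (Y / (h1 * s + σ * h2))))
        = (h1 * (s * (h1 * s + h2) / (h1 + h2) * (α / (h1 * s + σ * h2)))) * Y := by ring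
      have e2 : κ * (α / ((1 + h2 / h1) * R)) * (s * (h2 / h1 + s) / (σ * (h2 / h1) + s))
        = (h1 * (s * (h1 * s + h2) / (h1 + h2) * (α / (h1 * s + σ * h2)))) * (κ / R) := by
        have : σ * (h2 / h1) + s = (h1 * s + σ * h2) / h1 := by field_simp; ring
        rw [this]
        have : 1 + h2 / h1 = (h1 + h2) / h1 := by field_simp
        rw [this]
        have : h2 / h1 + s = (h1 * s + h2) / h1 := by field_simp; ring
        rw [this]
        field_simp
      rw [e1, e2]
      apply mul_le_mul_of_nonneg_left k1
      positivity
  linarith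

lemma I_bounds {σ ρ : ℝ} (hσ : 1 / 2 ≤ σ) (hρ : 0 < ρ) :
    0 ≤ (∫ s in (0:ℝ)..1, s * (ρ + s) / (σ * ρ + s)) ∧
    (∫ s in (0:ℝ)..1, s * (ρ + s) / (σ * ρ + s)) ≤ 1 := by
  have hσρ : 0 < σ * ρ := by positivity
  constructor
  · apply intervalIntegral.integral_nonneg zero_le_one
    intro s hs
    have := hs.1
    positivity
  · have : ∫ s in (0:ℝ)..1, 2 * s = 1 := by
      rw [intervalIntegral.integral_const_mul]; simp
    refine le_trans ?_ this.le
    apply intervalIntegral.integral_mono_on zero_le_one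
    · apply ContinuousOn.intervalIntegrable
      rw [Set.uIcc_of_le zero_le_one]
      apply ContinuousOn.div (by fun_prop) (by fun_prop)
      intro θ hθ
      have := hθ.1
      linarith
    · apply Continuous.intervalIntegrable; fun_prop
    · intro s hs
      have h0 := hs.1
      rw [div_le_iff₀ (by positivity)]
      have : ρ ≤ 2 * (σ * ρ) := by nlinarith
      nlinarith [mul_nonneg h0 h0]

lemma bracket_pos {α ρ J : ℝ} (hα0 : 0 < α) (hα1 : α < 1) (hρ : 3 / 10 < ρ) (hJ : J ≤ 1) :
    0 < 1 - α * (1 - α) / ((1 + ρ) * ρ ^ α) * J := by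
  have h1 : α * (1 - α) ≤ 1 / 4 := by nlinarith [sq_nonneg (α - 1 / 2)]
  have hp : 0 < ρ ^ α := Real.rpow_pos_of_pos (by linarith) _
  have hR : 1 / 4 < (1 + ρ) * ρ ^ α := by
    rcases le_total 1 ρ with h | h
    · have : 1 ≤ ρ ^ α := Real.one_le_rpow h hα0.le
      nlinarith
    · have : ρ ^ (1:ℝ) ≤ ρ ^ α := Real.rpow_le_rpow_of_exponent_ge (by linarith) h hα1.le
      rw [Real.rpow_one] at this
      nlinarith
  have : α * (1 - α) / ((1 + ρ) * ρ ^ α) < 1 := by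
    rw [div_lt_one (by linarith)]; linarith
  have h0 : 0 ≤ α * (1 - α) / ((1 + ρ) * ρ ^ α) := by
    apply div_nonneg (mul_nonneg hα0.le (by linarith)) (by linarith)
  nlinarith

lemma g1_pos {α ρ : ℝ} (hα0 : 0 < α) (hα1 : α < 1) (hρ : 3 / 10 < ρ) :
    0 < 2 * (1 - α / 2) - (1 - α) / ρ ^ α := by
  have hρ0 : 0 < ρ := by linarith
  have b := rpow_one_add_le_one_add_mul_self (s := 1 / ρ - 1) (p := α)
    (by have : 0 < 1 / ρ := by positivity
        linarith) hα0.le hα1.le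
  have e : 1 + (1 / ρ - 1) = ρ⁻¹ := by ring
  rw [e, Real.inv_rpow hρ0.le] at b
  have c : 1 / ρ < 4 := by rw [div_lt_iff₀ hρ0]; linarith
  have d : (1 - α) / ρ ^ α ≤ (1 - α) * (1 + α * (1 / ρ - 1)) := by
    rw [div_eq_mul_inv]; exact mul_le_mul_of_nonneg_left b (by linarith)
  have f : α * (1 - α) * (1 / ρ) ≤ 1 / 4 * 4 := by
    apply mul_le_mul _ c.le (by positivity) (by norm_num)
    nlinarith [sq_nonneg (α - 1 / 2)]
  have f2 : 0 < α * (1 - α) := mul_pos hα0 (by linarith)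
  nlinarith

section mesh

variable {α : ℝ} {t : ℕ → ℝ}

lemma tau_pos (hmono : StrictMono t) {j : ℕ} (hj : 1 ≤ j) : 0 < tau t j :=
  sub_pos.2 (hmono (by omega))

lemma tau_nonneg (hmono : StrictMono t) (j : ℕ) : 0 ≤ tau t j :=
  sub_nonneg.2 (hmono.monotone (by omega))

lemma seg_end (t : ℕ → ℝ) (j : ℕ) : t (j - 1) + tau t j = t j := by unfold tau; ring

lemma tstar_gt (hα : α ∈ Set.Ioo (0:ℝ) 1) (hmono : StrictMono t) {j k : ℕ} (hjk : j < k) :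
    t j < tstar α t k := by
  have h1 : t j ≤ t (k - 1) := hmono.monotone (by omega)
  have h2 := tau_pos hmono (by omega : 1 ≤ k)
  have : 0 < (1 - α / 2) * tau t k := mul_pos (by linarith [hα.2]) h2
  unfold tstar; linarith

lemma tstar_le (hα : α ∈ Set.Ioo (0:ℝ) 1) (hmono : StrictMono t) {k : ℕ} (hk : 1 ≤ k) :
    tstar α t k ≤ tstar α t (k + 1) := by
  have h2 := tau_pos hmono hk
  have h1 := tstar_gt hα hmono (Nat.lt_succ_self k)
  have h3 := seg_end t k
  have : tstar α t k ≤ t k := by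
    unfold tstar; nlinarith [hα.1]
  exact this.trans h1.le

lemma ccoef_eq (hα : α ∈ Set.Ioo (0:ℝ) 1) (hmono : StrictMono t) {j k : ℕ} (hjk : j < k) :
    ccoef α t j k = Cf (tau t j) (tau t (j + 1)) (t (j - 1)) (ker α (tstar α t k)) := by
  unfold ccoef Cf
  apply intervalIntegral.integral_congr
  intro θ hθ
  rw [Set.uIcc_of_le zero_le_one] at hθ
  have m := (mem_seg (A := t (j - 1)) (tau_nonneg hmono j) hθ).2
  rw [seg_end] at m
  have := tstar_gt hα hmono hjk
  simp only [ker]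
  rw [Real.rpow_neg (by linarith), ← div_eq_mul_inv, div_div]

lemma acoef_eq (hα : α ∈ Set.Ioo (0:ℝ) 1) (hmono : StrictMono t) {j k : ℕ} (hjk : j < k) :
    acoef α t j k = - Af (tau t j) (tau t (j + 1)) (t (j - 1)) (ker α (tstar α t k)) := by
  unfold acoef Af
  rw [← intervalIntegral.integral_neg]
  apply intervalIntegral.integral_congr
  intro θ hθ
  rw [Set.uIcc_of_le zero_le_one] at hθ
  have m := (mem_seg (A := t (j - 1)) (tau_nonneg hmono j) hθ).2
  rw [seg_end] at m
  have := tstar_gt hα hmono hjk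
  simp only [ker]
  rw [Real.rpow_neg (by linarith), ← div_eq_mul_inv, div_div, ← neg_div]
  congr 1; ring

lemma ker_nonneg (hα : α ∈ Set.Ioo (0:ℝ) 1) (hmono : StrictMono t) {j k : ℕ} (hjk : j < k) :
    0 ≤ ker α (tstar α t k) (t j) := by
  have := tstar_gt hα hmono hjk
  exact Real.rpow_nonneg (by linarith) _

lemma ker_anti (hα : α ∈ Set.Ioo (0:ℝ) 1) (hmono : StrictMono t) {j k : ℕ} (hjk : j < k) :
    ker α (tstar α t (k + 1)) (t j) ≤ ker α (tstar α t k) (t j) := by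
  have := tstar_gt hα hmono hjk
  have := tstar_le hα hmono (by omega : 1 ≤ k)
  exact Real.rpow_le_rpow_of_nonpos (by linarith) (by linarith) (by linarith [hα.1])

lemma ker_diag (k : ℕ) :
    ker α (tstar α t k) (t (k - 1)) = ((1 - α / 2) * tau t k) ^ (-α) := by
  unfold ker tstar; congr 1; ring

lemma P2_nonneg (hα : α ∈ Set.Ioo (0:ℝ) 1) (hmono : StrictMono t) {i k : ℕ} (hik : i < k) :
    ker α (tstar α t k) (t (i - 1)) ≤ - acoef α t i k := by
  rw [acoef_eq hα hmono hik, neg_neg]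
  apply Af_ge (tau_nonneg hmono i) (tau_pos hmono (by omega)) (good_ker hα.1 _)
  rw [seg_end]; exact tstar_gt hα hmono hik

lemma P2_anti (hα : α ∈ Set.Ioo (0:ℝ) 1) (hmono : StrictMono t) {i k : ℕ} (hik : i < k) :
    - acoef α t i (k + 1) - ker α (tstar α t (k + 1)) (t (i - 1))
      ≤ - acoef α t i k - ker α (tstar α t k) (t (i - 1)) := by
  rw [acoef_eq hα hmono hik, acoef_eq hα hmono (by omega : i < k + 1)]
  have hb : t (i - 1) + tau t i < tstar α t k := by rw [seg_end]; exact tstar_gt hα hmono hik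
  have hT := tstar_le hα hmono (by omega : 1 ≤ k)
  have h := Af_ge (h2 := tau t (i + 1)) (tau_nonneg hmono i) (tau_pos hmono (by omega))
    (good_ker_sub (a := t (i - 1)) hα.1 hb hT)
  rw [Af_sub (tau_nonneg hmono i) (good_ker hα.1 hb).cont
    (good_ker hα.1 (hb.trans_le hT)).cont] at h
  linarith

lemma P4 (hα : α ∈ Set.Ioo (0:ℝ) 1) (hmono : StrictMono t) {i k : ℕ} (hik : i < k) :
    - acoef α t i k ≤ ker α (tstar α t k) (t i) := by
  rw [acoef_eq hα hmono hik, neg_neg]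
  have hb : t (i - 1) + tau t i < tstar α t k := by rw [seg_end]; exact tstar_gt hα hmono hik
  have := Af_le (h2 := tau t (i + 1)) (tau_nonneg hmono i) (tau_pos hmono (by omega))
    (good_ker (a := t (i - 1)) hα.1 hb)
  rwa [seg_end] at this

lemma P5 (hα : α ∈ Set.Ioo (0:ℝ) 1) (hmono : StrictMono t) {k : ℕ} (hk : 1 ≤ k) :
    - acoef α t k (k + 1) ≤ ker α (tstar α t (k + 1)) (t (k - 1)) +
      ((1 - α / 2) * tau t k) ^ (-α) *
      (α / ((1 + rho t (k + 1)) * rho t (k + 1) ^ α) *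
        ∫ s in (0:ℝ)..1, s * (rho t (k + 1) + s) / ((1 - α / 2) * rho t (k + 1) + s)) := by
  rw [acoef_eq hα hmono (Nat.lt_succ_self k), neg_neg]
  apply Af_bound hα.1 (by linarith [hα.2]) (tau_pos hmono hk) (tau_pos hmono (by omega))
  rw [seg_end]; rfl

lemma P7 (hα : α ∈ Set.Ioo (0:ℝ) 1) (hmono : StrictMono t) {i k : ℕ} (hik : i < k) :
    0 ≤ ccoef α t i k := by
  rw [ccoef_eq hα hmono hik]
  apply Cf_nonneg (tau_nonneg hmono i) (tau_pos hmono (by omega)) (good_ker hα.1 _)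
  rw [seg_end]; exact tstar_gt hα hmono hik

lemma seg_start (t : ℕ → ℝ) {i : ℕ} : t (i - 1 - 1) + tau t (i - 1) = t (i - 1) := seg_end t (i - 1)

lemma P1_nonneg (hα : α ∈ Set.Ioo (0:ℝ) 1) (hmono : StrictMono t) {i k : ℕ} (hi : 1 ≤ i) (hik : i < k)
    (hcond : tau t (i + 1) * tau t (i - 1) ^ 3 ≤
      tau t i ^ 2 * (tau t (i - 1) + tau t i) * (tau t i + 3 * tau t (i + 1))) :
    0 ≤ ccoef α t i k - ccoef α t (i - 1) k + ker α (tstar α t k) (t i) + acoef α t i k := by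
  rw [acoef_eq hα hmono hik, ccoef_eq hα hmono hik, ccoef_eq hα hmono (by omega : i - 1 < k)]
  have hb : t (i - 1 - 1) + tau t (i - 1) + tau t i < tstar α t k := by
    rw [seg_start, seg_end]; exact tstar_gt hα hmono hik
  have := key_nonneg (tau_nonneg hmono (i - 1)) (tau_pos hmono hi) (tau_pos hmono (by omega)) hcond
    (good_ker (a := t (i - 1 - 1)) hα.1 hb)
  rw [seg_start, seg_end] at this
  rw [Nat.sub_add_cancel hi]
  linarith

lemma P1_anti (hα : α ∈ Set.Ioo (0:ℝ) 1) (hmono : StrictMono t) {i k : ℕ} (hi : 1 ≤ i) (hik : i < k)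
    (hcond : tau t (i + 1) * tau t (i - 1) ^ 3 ≤
      tau t i ^ 2 * (tau t (i - 1) + tau t i) * (tau t i + 3 * tau t (i + 1))) :
    ccoef α t i (k + 1) - ccoef α t (i - 1) (k + 1) + ker α (tstar α t (k + 1)) (t i)
        + acoef α t i (k + 1)
      ≤ ccoef α t i k - ccoef α t (i - 1) k + ker α (tstar α t k) (t i) + acoef α t i k := by
  rw [acoef_eq hα hmono hik, ccoef_eq hα hmono hik, ccoef_eq hα hmono (by omega : i - 1 < k),
    acoef_eq hα hmono (by omega : i < k + 1), ccoef_eq hα hmono (by omega : i < k + 1),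
    ccoef_eq hα hmono (by omega : i - 1 < k + 1)]
  have hb : t (i - 1 - 1) + tau t (i - 1) + tau t i < tstar α t k := by
    rw [seg_start, seg_end]; exact tstar_gt hα hmono hik
  have hT := tstar_le hα hmono (by omega : 1 ≤ k)
  have := key_nonneg (tau_nonneg hmono (i - 1)) (tau_pos hmono hi) (tau_pos hmono (by omega)) hcond
    (good_ker_sub (a := t (i - 1 - 1)) hα.1 hb hT)
  have b0 : t (i - 1 - 1) + tau t (i - 1) < tstar α t k := by
    rw [seg_start]; exact tstar_gt hα hmono (by omega)
  have b1 : t (i - 1) + tau t i < tstar α t k := by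
    rw [seg_end]; exact tstar_gt hα hmono (by omega)
  rw [seg_start, seg_end, Cf_sub (tau_nonneg hmono _) (good_ker hα.1 b0).cont
    (good_ker hα.1 (b0.trans_le hT)).cont, Cf_sub (tau_nonneg hmono _) (good_ker hα.1 b1).cont
    (good_ker hα.1 (b1.trans_le hT)).cont, Af_sub (tau_nonneg hmono _) (good_ker hα.1 b1).cont
    (good_ker hα.1 (b1.trans_le hT)).cont] at this
  rw [Nat.sub_add_cancel hi]
  linarith

lemma ccoef_zero (k : ℕ) : ccoef α t 0 k = 0 := by
  simp [ccoef, tau]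

lemma Mentry_lower {k j : ℕ} (hj : 1 ≤ j) (hjk : j < k) : Mentry α t k j = dcoef α t j k := by
  unfold Mentry
  rw [if_neg (by omega), if_neg (by omega)]
  split_ifs with h
  · subst h; simp [dcoef, ccoef_zero]
  · rfl

lemma Mentry_diag (hα : α ∈ Set.Ioo (0:ℝ) 1) (hmono : StrictMono t) {k : ℕ} (hk : 1 ≤ k) :
    2 * Mentry α t k k = 2 * ccoef α t (k - 1) k
      + (1 - α)⁻¹ * ((2 - α) * ((1 - α / 2) * tau t k) ^ (-α)) := by
  unfold Mentry
  rw [if_neg (by omega), if_pos rfl]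
  have hσ : 0 < 1 - α / 2 := by linarith [hα.2]
  have hτ := tau_pos hmono hk
  rw [Real.mul_rpow hσ.le hτ.le, Real.rpow_neg hτ.le,
    show 1 - α = 1 + -α by ring, Real.rpow_add hσ, Real.rpow_one]
  have : 0 < tau t k ^ α := Real.rpow_pos_of_pos hτ _
  have : 0 < 1 + -α := by linarith [hα.2]
  field_simp

end mesh

end

/-- Positive semidefiniteness of the L2-1_σ bilinear form: under the step-ratio
condition, `xᵀ(M + Mᵀ)x ≥ (1-α)⁻¹ ∑ g_k(α) x_k² ≥ 0`, with every `g_k(α) > 0`. -/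
theorem quadratic_form_psd (α : ℝ) (hα : α ∈ Set.Ioo (0:ℝ) 1)
    (t : ℕ → ℝ) (ht0 : t 0 = 0) (hmono : StrictMono t)
    (ρstar η : ℝ) (hρpos : 0 < ρstar)
    (hρroot : ρstar * (1 + ρstar) = 1 - 3 * ρstar ^ 2 * (1 + ρstar))
    (hηpos : 0 < η) (hηroot : 1 - 3 * η ^ 2 * (1 + η) = 0)
    (hmesh : ∀ k : ℕ, 2 ≤ k →
      (ρstar < rho t k ∧ rho t k < η ∧ ρstar < rho t (k + 1) ∧
        rho t (k + 1) ≤ rho t k ^ 2 * (1 + rho t k) /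
          (1 - 3 * rho t k ^ 2 * (1 + rho t k))) ∨
      (η ≤ rho t k ∧ ρstar < rho t (k + 1)))
    (n : ℕ) (hn : 1 ≤ n) (x : ℕ → ℝ) :
    (∑ k ∈ Finset.Icc 1 n, ∑ j ∈ Finset.Icc 1 n,
        x k * (Mentry α t k j + Mentry α t j k) * x j)
      ≥ (1 - α)⁻¹ * ∑ k ∈ Finset.Icc 1 n, gfun α t n k * x k ^ 2 ∧
    (1 - α)⁻¹ * ∑ k ∈ Finset.Icc 1 n, gfun α t n k * x k ^ 2 ≥ 0 ∧
    ∀ k : ℕ, 1 ≤ k → k ≤ n → 0 < gfun α t n k := by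
  have hα0 := hα.1
  have hα1 := hα.2
  have h1α : 0 < 1 - α := by linarith
  have hσ : 0 < 1 - α / 2 := by linarith
  -- lower bounds on the step ratios
  have hρs : 3 / 10 < ρstar := by
    by_contra! hc
    have h2 : ρstar ^ 2 ≤ (3 / 10) ^ 2 := by gcongr
    nlinarith [mul_nonneg hρpos.le hρpos.le, mul_nonneg (mul_nonneg hρpos.le hρpos.le) hρpos.le]
  have hηs : 3 / 10 < η := by
    by_contra! hc
    have h2 : η ^ 2 ≤ (3 / 10) ^ 2 := by gcongr
    nlinarith [mul_nonneg hηpos.le hηpos.le]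
  have hrho : ∀ k, 2 ≤ k → 3 / 10 < rho t k := by
    intro k hk
    rcases hmesh k hk with h | h
    · linarith [h.1]
    · linarith [h.1]
  have hcond : ∀ i, 1 ≤ i → tau t (i + 1) * tau t (i - 1) ^ 3 ≤
      tau t i ^ 2 * (tau t (i - 1) + tau t i) * (tau t i + 3 * tau t (i + 1)) := by
    intro i hi
    have p1 := tau_pos hmono hi
    have p2 := tau_pos hmono (by omega : 1 ≤ i + 1)
    have p0 := tau_nonneg hmono (i - 1)
    rcases Nat.lt_or_ge i 2 with h | h
    · have : i = 1 := by omega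
      subst this
      have : tau t (1 - 1) = 0 := by simp [tau]
      have e : tau t (1 + 1) * tau t (1 - 1) ^ 3 = 0 := by rw [this]; ring
      rw [e]
      positivity
    · have p0' := tau_pos hmono (by omega : 1 ≤ i - 1)
      have hr := hrho i h
      have hr0 : 0 < rho t i := by linarith
      have hρ0 : 0 < rho t (i + 1) := by linarith [hrho (i + 1) (by omega)]
      have main : rho t (i + 1) * (1 - 3 * rho t i ^ 2 * (1 + rho t i))
          ≤ rho t i ^ 2 * (1 + rho t i) := by
        rcases hmesh i h with ⟨_, h2, _, h4⟩ | ⟨h1, _⟩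
        · have hsq : rho t i ^ 2 * (1 + rho t i) < η ^ 2 * (1 + η) := by gcongr
          have hden : 0 < 1 - 3 * rho t i ^ 2 * (1 + rho t i) := by nlinarith
          rwa [le_div_iff₀ hden] at h4
        · have hsq : η ^ 2 * (1 + η) ≤ rho t i ^ 2 * (1 + rho t i) := by gcongr
          have hden : 1 - 3 * rho t i ^ 2 * (1 + rho t i) ≤ 0 := by nlinarith
          have : 0 ≤ rho t i ^ 2 * (1 + rho t i) := by positivity
          nlinarith
      have e1 : tau t i = rho t i * tau t (i - 1) := by unfold rho; field_simp
      have e2 : tau t (i + 1) = rho t (i + 1) * tau t i := by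
        unfold rho; rw [Nat.add_sub_cancel]; field_simp
      rw [e2, e1]
      have hq : 0 < rho t i * tau t (i - 1) ^ 4 := by positivity
      nlinarith [mul_le_mul_of_nonneg_right main hq.le]
  -- positivity of the weights
  have hgpos : ∀ k : ℕ, 1 ≤ k → k ≤ n → 0 < gfun α t n k := by
    intro k hk hkn
    have hκ : ∀ j, 1 ≤ j → 0 < ((1 - α / 2) * tau t j) ^ (-α) := fun j hj =>
      Real.rpow_pos_of_pos (mul_pos hσ (tau_pos hmono hj)) _
    unfold gfun
    split_ifs with h1 h2
    · exact mul_pos (hκ 1 le_rfl) (g1_pos hα0 hα1 (hrho 2 le_rfl))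
    · have := P7 hα hmono (by omega : n - 1 < n)
      have := hκ n hn
      positivity
    · have c0 := P7 hα hmono (by omega : k - 1 < k)
      have hr := hrho (k + 1) (by omega)
      have b := (I_bounds (σ := 1 - α / 2) (ρ := rho t (k + 1)) (by linarith) (by linarith)).2
      have := mul_pos (hκ k hk) (bracket_pos hα0 hα1 hr b)
      have := mul_nonneg h1α.le c0
      linarith
  -- the modified lower triangular array
  obtain ⟨N, hN⟩ : ∃ N : ℕ → ℕ → ℝ, ∀ k j, N k j = if j = 0 then 0 else if j = k then
      2 * Mentry α t k k - (1 - α)⁻¹ * gfun α t n k else Mentry α t k j := ⟨_, fun _ _ => rfl⟩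
  have hN0 : ∀ k, N k 0 = 0 := fun k => by rw [hN, if_pos rfl]
  have hNl : ∀ k j, 1 ≤ j → j < k → N k j = ccoef α t (j - 1) k - acoef α t j k := by
    intro k j hj hjk
    rw [hN, if_neg (by omega), if_neg (by omega), Mentry_lower hj hjk, dcoef]
  have hNd : ∀ k, 1 ≤ k → N k k = 2 * ccoef α t (k - 1) k
      + (1 - α)⁻¹ * ((2 - α) * ((1 - α / 2) * tau t k) ^ (-α)) - (1 - α)⁻¹ * gfun α t n k := by
    intro k hk
    rw [hN, if_neg (by omega), if_pos rfl, Mentry_diag hα hmono hk]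
  have hNd1 : N 1 1 = ker α (tstar α t 2) (t 1) := by
    rw [hNd 1 le_rfl, gfun, if_pos rfl]
    have p1 := tau_pos hmono (le_refl 1)
    have p2 := tau_pos hmono (by omega : 1 ≤ 2)
    have k2 := ker_diag (α := α) (t := t) 2
    norm_num only at k2
    rw [k2]
    have e2 : tau t 2 = rho t 2 * tau t 1 := by
      unfold rho; norm_num only; field_simp
    have hr : 0 < rho t 2 := by linarith [hrho 2 le_rfl]
    rw [e2, Real.mul_rpow hσ.le p1.le, Real.mul_rpow hσ.le (mul_pos hr p1).le,
      Real.mul_rpow hr.le p1.le, Real.rpow_neg hr.le]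
    simp only [Nat.sub_self, ccoef_zero]
    have : 0 < rho t 2 ^ α := Real.rpow_pos_of_pos hr _
    field_simp
    ring
  have hNgen : ∀ k, 2 ≤ k → k < n → N k k = ccoef α t (k - 1) k +
      ((1 - α / 2) * tau t k) ^ (-α) + ((1 - α / 2) * tau t k) ^ (-α) *
      (α / ((1 + rho t (k + 1)) * rho t (k + 1) ^ α) *
        ∫ s in (0:ℝ)..1, s * (rho t (k + 1) + s) / ((1 - α / 2) * rho t (k + 1) + s)) := by
    intro k hk hkn
    rw [hNd k (by omega), gfun, if_neg (by omega), if_neg (by omega)]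
    generalize (∫ s in (0:ℝ)..1, s * (rho t (k + 1) + s) / ((1 - α / 2) * rho t (k + 1) + s)) = J
    have hr := hrho (k + 1) (by omega)
    have : 0 < rho t (k + 1) ^ α := Real.rpow_pos_of_pos (by linarith) _
    have : 0 < 1 + rho t (k + 1) := by linarith
    field_simp
    ring
  have hNn : 2 ≤ n → ccoef α t (n - 1) n + ((1 - α / 2) * tau t n) ^ (-α) ≤ N n n := by
    intro h2
    have hκ : 0 < ((1 - α / 2) * tau t n) ^ (-α) :=
      Real.rpow_pos_of_pos (mul_pos hσ (tau_pos hmono hn)) _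
    have hg : gfun α t n n ≤ (1 - α) * ccoef α t (n - 1) n + ((1 - α / 2) * tau t n) ^ (-α) := by
      rw [gfun, if_neg (by omega)]
      split_ifs with h
      · exact le_rfl
      · have hr := hrho (n + 1) (by omega)
        have b := (I_bounds (σ := 1 - α / 2) (ρ := rho t (n + 1)) (by linarith) (by linarith)).1
        have hp : 0 < rho t (n + 1) ^ α := Real.rpow_pos_of_pos (by linarith) _
        have q : 0 ≤ α * (1 - α) / ((1 + rho t (n + 1)) * rho t (n + 1) ^ α) := by
          have : 0 < 1 + rho t (n + 1) := by linarith
          positivity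
        have := mul_nonneg hκ.le (mul_nonneg q b)
        linarith
    rw [hNd n hn]
    have := mul_le_mul_of_nonneg_left hg (inv_pos.2 h1α).le
    have e : (1 - α)⁻¹ * ((1 - α) * ccoef α t (n - 1) n + ((1 - α / 2) * tau t n) ^ (-α))
      = 2 * ccoef α t (n - 1) n + (1 - α)⁻¹ * ((2 - α) * ((1 - α / 2) * tau t n) ^ (-α))
        - (ccoef α t (n - 1) n + ((1 - α / 2) * tau t n) ^ (-α)) := by
      field_simp; ring
    linarith
  have hA : ∀ k i, k < n → i < k → N (k + 1) (i + 1) - N (k + 1) i ≤ N k (i + 1) - N k i := by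
    intro k i hkn hik
    rcases Nat.eq_zero_or_pos i with h0 | hi
    · subst h0
      rw [hN0, hN0, sub_zero, sub_zero, zero_add]
      rcases Nat.lt_or_ge k 2 with hk | hk
      · have : k = 1 := by omega
        subst this
        rw [hNd1, hNl 2 1 le_rfl (by omega), Nat.sub_self, ccoef_zero, zero_sub]
        exact P4 hα hmono (by omega)
      · rw [hNl (k + 1) 1 le_rfl (by omega), hNl k 1 le_rfl (by omega), Nat.sub_self, ccoef_zero,
          ccoef_zero]
        have a := P2_anti hα hmono (by omega : 1 < k)
        have b := ker_anti hα hmono (by omega : 1 - 1 < k)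
        linarith
    · have key := P1_anti hα hmono hi hik (hcond i hi)
      rw [hNl (k + 1) i hi (by omega), hNl k i hi hik, hNl (k + 1) (i + 1) (by omega) (by omega),
        Nat.add_sub_cancel]
      rcases Nat.lt_or_ge (i + 1) k with hk | hk
      · rw [hNl k (i + 1) (by omega) hk, Nat.add_sub_cancel]
        have a := P2_anti hα hmono hk
        rw [Nat.add_sub_cancel] at a
        linarith
      · have : k = i + 1 := by omega
        subst this
        rw [hNgen (i + 1) (by omega) hkn]
        have a := P5 hα hmono (by omega : 1 ≤ i + 1)
        rw [← ker_diag] at a ⊢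
        rw [Nat.add_sub_cancel] at a ⊢
        linarith
  have hB : ∀ i, i < n → 0 ≤ N n (i + 1) - N n i := by
    intro i hin
    rcases Nat.eq_zero_or_pos i with h0 | hi
    · subst h0
      rw [hN0, sub_zero, zero_add]
      rcases Nat.lt_or_ge n 2 with hk | hk
      · have : n = 1 := by omega
        subst this
        rw [hNd1]
        exact ker_nonneg hα hmono (by omega)
      · rw [hNl n 1 le_rfl (by omega), Nat.sub_self, ccoef_zero]
        have a := P2_nonneg hα hmono (by omega : 1 < n)
        have b := ker_nonneg hα hmono (by omega : 1 - 1 < n)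
        linarith
    · have key := P1_nonneg hα hmono hi hin (hcond i hi)
      rw [hNl n i hi hin]
      rcases Nat.lt_or_ge (i + 1) n with hk | hk
      · rw [hNl n (i + 1) (by omega) hk, Nat.add_sub_cancel]
        have a := P2_nonneg hα hmono hk
        rw [Nat.add_sub_cancel] at a
        linarith
      · have : n = i + 1 := by omega
        subst this
        have a := hNn (by omega)
        rw [← ker_diag, Nat.add_sub_cancel] at a
        linarith
  have hquad := quad_nonneg N hN0 x n hA hB
  have hform := quad_form_eq (Mentry α t) (fun k => by simp [Mentry])
    (fun k j h => by unfold Mentry; rw [if_pos (Or.inr h)]) x n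
  refine ⟨?_, ?_, hgpos⟩
  · rw [hform, ge_iff_le, ← sub_nonneg]
    refine hquad.trans_eq ?_
    have eg : ∑ k ∈ Finset.Icc 1 n, gfun α t n k * x k ^ 2
        = ∑ k ∈ Finset.range (n + 1), if k = 0 then 0 else gfun α t n k * x k ^ 2 := by
      rw [Finset.range_eq_Ico, Finset.sum_eq_sum_Ico_succ_bot (by omega), if_pos rfl, zero_add]
      apply Finset.sum_congr rfl
      intro k hk
      have := (Finset.mem_Icc.1 hk).1
      rw [if_neg (by omega)]
    rw [eg, Finset.mul_sum, ← Finset.sum_sub_distrib]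
    apply Finset.sum_congr rfl
    intro k _
    have er : ∑ j ∈ Finset.range k, N k j * x k * x j
        = ∑ j ∈ Finset.range k, Mentry α t k j * x k * x j := by
      apply Finset.sum_congr rfl
      intro j hj
      have := Finset.mem_range.1 hj
      rw [hN]
      split_ifs with h1 h2
      · subst h1; simp [Mentry]
      · omega
      · rfl
    rw [er, hN]
    rcases Nat.eq_zero_or_pos k with h | h
    · subst h; simp [Mentry]
    · rw [if_neg (by omega), if_pos rfl, if_neg (by omega)]
      ring
  · apply mul_nonneg (inv_pos.2 h1α).le
    apply Finset.sum_nonneg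
    intro k hk
    have := Finset.mem_Icc.1 hk
    exact mul_nonneg (hgpos k this.1 this.2).le (sq_nonneg _)
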